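/- arXiv:math/0511351 — 7 statements merged into one kernel-verified Lean document; each statement's English description precedes it below -/
import Mathlib

section
/- Let n ≥ 1, let U ⊆ ℂ^{n+1} be open, and let ξ : U → ℂ be holomorphic such that for every u = (u_0, …, u_n) ∈ U one has u_0 + u_1·ξ(u) + u_2·ξ(u)^2 + … + u_n·ξ(u)^n = 0 and u_1 + 2u_2·ξ(u) + … + n·u_n·ξ(u)^{n−1} ≠ 0 (ξ(u) is a simple root of P_u). Then for every r ≥ 1 and all indices i_1, …, i_r, j_1, …, j_r ∈ {0, 1, …, n} with i_1 + … + i_r = j_1 + … + j_r, the iterated partial derivatives coincide on U: ∂^r ξ/∂u_{i_1}⋯∂u_{i_r} = ∂^r ξ/∂u_{j_1}⋯∂u_{j_r}. -/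
/-!
On `U` the root `ξ` is smooth and satisfies `∂ξ/∂u_i = -ξ^i / P_u'(ξ)`, both obtained by
differentiating `P_u(ξ(u)) = 0` (smoothness by bootstrapping: the right-hand side is as regular
as `ξ` itself). In particular `∂_i ξ = ξ^i ∂_0 ξ`, so with `G_s = ξ^{s+1} / (s+1)` one gets
`∂_i G_s = ξ^s ∂_i ξ = ξ^{s+i} ∂_0 ξ = ∂_0 G_{s+i}`. As partial derivatives of smooth functions
commute, induction on the list of indices, starting from `ξ = G_0`, gives
`∂_{i_1} ⋯ ∂_{i_r} ξ = ∂_0^r G_{i_1 + ⋯ + i_r}`, which depends only on `r` and on the sum of the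
indices.
-/

/-- The complex partial derivative `∂f/∂u_i` of a function of `N` complex
variables. -/
noncomputable def cpartialDeriv {N : ℕ} (i : Fin N)
    (f : (Fin N → ℂ) → ℂ) : (Fin N → ℂ) → ℂ :=
  fun u => fderiv ℂ f u (Pi.single i 1)

/-- The iterated partial derivative `∂^r f/∂u_{i_1}⋯∂u_{i_r}` along a list of
indices. -/
noncomputable def cpartialDerivList {N : ℕ} (l : List (Fin N))
    (f : (Fin N → ℂ) → ℂ) : (Fin N → ℂ) → ℂ :=
  l.foldr (fun i g => cpartialDeriv i g) f

open scoped ContDiff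

theorem cpartialDeriv_congr {N : ℕ} {U : Set (Fin N → ℂ)} (hU : IsOpen U)
    {f g : (Fin N → ℂ) → ℂ} (h : Set.EqOn f g U) (i : Fin N) :
    Set.EqOn (cpartialDeriv i f) (cpartialDeriv i g) U := by
  intro u hu
  have : f =ᶠ[nhds u] g := Filter.eventuallyEq_of_mem (hU.mem_nhds hu) h
  simp only [cpartialDeriv, this.fderiv_eq]

theorem cpartialDeriv_contDiffOn {N : ℕ} {U : Set (Fin N → ℂ)} (hU : IsOpen U)
    {f : (Fin N → ℂ) → ℂ} (h : ContDiffOn ℂ ∞ f U) (i : Fin N) :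
    ContDiffOn ℂ ∞ (cpartialDeriv i f) U :=
  ((contDiffOn_infty_iff_fderiv_of_isOpen hU).1 h).2.clm_apply contDiffOn_const

theorem cpartialDeriv_comm {N : ℕ} {U : Set (Fin N → ℂ)} (hU : IsOpen U)
    {f : (Fin N → ℂ) → ℂ} (h : ContDiffOn ℂ ∞ f U) (i j : Fin N) :
    Set.EqOn (cpartialDeriv i (cpartialDeriv j f)) (cpartialDeriv j (cpartialDeriv i f)) U := by
  intro u hu
  have hd : DifferentiableAt ℂ (fderiv ℂ f) u :=
    (((contDiffOn_infty_iff_fderiv_of_isOpen hU).1 h).2.differentiableOn (by simp)).differentiableAt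
      (hU.mem_nhds hu)
  have hs : IsSymmSndFDerivAt ℂ f u :=
    (h.contDiffAt (hU.mem_nhds hu)).isSymmSndFDerivAt (by
      rw [minSmoothness_of_isRCLikeNormedField]
      exact WithTop.coe_le_coe.2 (le_top (a := (2 : ℕ∞))))
  have key (a b : Fin N) : cpartialDeriv a (cpartialDeriv b f) u
      = fderiv ℂ (fderiv ℂ f) u (Pi.single a 1) (Pi.single b 1) := by
    unfold cpartialDeriv
    rw [fderiv_clm_apply hd (differentiableAt_const _)]
    simp
  rw [key, key, hs.eq]

theorem cpartialDeriv_iterate_congr {N : ℕ} {U : Set (Fin N → ℂ)} (hU : IsOpen U) (j : Fin N)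
    (k : ℕ) {f g : (Fin N → ℂ) → ℂ} (h : Set.EqOn f g U) :
    Set.EqOn ((cpartialDeriv j)^[k] f) ((cpartialDeriv j)^[k] g) U := by
  induction k generalizing f g with
  | zero => exact h
  | succ k ih => exact ih (cpartialDeriv_congr hU h j)

theorem cpartialDeriv_iterate_comm {N : ℕ} {U : Set (Fin N → ℂ)} (hU : IsOpen U) (i j : Fin N)
    (k : ℕ) {f : (Fin N → ℂ) → ℂ} (h : ContDiffOn ℂ ∞ f U) :
    Set.EqOn (cpartialDeriv i ((cpartialDeriv j)^[k] f))
      ((cpartialDeriv j)^[k] (cpartialDeriv i f)) U := by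
  induction k generalizing f with
  | zero => exact fun _ _ => rfl
  | succ k ih =>
    exact (ih (cpartialDeriv_contDiffOn hU h j)).trans
      (cpartialDeriv_iterate_congr hU j k (cpartialDeriv_comm hU h i j))

/-- The coefficient derivative of a simple root, from implicit differentiation of
`P_u(ξ(u)) = 0`: `dξ(v) = -P_v(ξ) / P_u'(ξ)`. -/
theorem root_fderiv {n : ℕ} {U : Set (Fin (n + 1) → ℂ)} (hU : IsOpen U)
    {ξ : (Fin (n + 1) → ℂ) → ℂ} (hξ : DifferentiableOn ℂ ξ U)
    (hroot : ∀ u ∈ U, ∑ t : Fin (n + 1), u t * ξ u ^ (t : ℕ) = 0)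
    (hsimple : ∀ u ∈ U,
      ∑ t : Fin (n + 1), ((t : ℕ) : ℂ) * u t * ξ u ^ ((t : ℕ) - 1) ≠ 0)
    {u : Fin (n + 1) → ℂ} (hu : u ∈ U) :
    fderiv ℂ ξ u =
      (-(∑ t : Fin (n + 1), ((t : ℕ) : ℂ) * u t * ξ u ^ ((t : ℕ) - 1))⁻¹) •
        ∑ t : Fin (n + 1), (ξ u ^ (t : ℕ)) •
          (ContinuousLinearMap.proj t : (Fin (n + 1) → ℂ) →L[ℂ] ℂ) := by
  have hd : HasFDerivAt ξ (fderiv ℂ ξ u) u :=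
    (hξ.differentiableAt (hU.mem_nhds hu)).hasFDerivAt
  have h1 : HasFDerivAt (fun w : Fin (n + 1) → ℂ => ∑ t : Fin (n + 1), w t * ξ w ^ (t : ℕ))
      (∑ t : Fin (n + 1), (u t • (((t : ℕ) • ξ u ^ ((t : ℕ) - 1)) • fderiv ℂ ξ u) +
        ξ u ^ (t : ℕ) • (ContinuousLinearMap.proj t : (Fin (n + 1) → ℂ) →L[ℂ] ℂ))) u := by
    refine HasFDerivAt.fun_sum fun t _ => ?_
    exact (hasFDerivAt_apply t u).mul (hd.pow (t : ℕ))
  have h0 : (fun w : Fin (n + 1) → ℂ => ∑ t : Fin (n + 1), w t * ξ w ^ (t : ℕ))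
      =ᶠ[nhds u] fun _ => 0 :=
    Filter.eventuallyEq_of_mem (hU.mem_nhds hu) hroot
  have h2 := h1.unique ((hasFDerivAt_const (0 : ℂ) u).congr_of_eventuallyEq h0)
  ext v
  have h3 := congrArg (fun L => L v) h2
  simp only [Finset.sum_add_distrib, add_apply, sum_apply,
    smul_apply, ContinuousLinearMap.proj_apply, smul_eq_mul,
    nsmul_eq_mul, zero_apply] at h3 ⊢
  have h4 : ∑ t : Fin (n + 1), u t * (((t : ℕ) : ℂ) * ξ u ^ ((t : ℕ) - 1) * fderiv ℂ ξ u v)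
      = (∑ t : Fin (n + 1), ((t : ℕ) : ℂ) * u t * ξ u ^ ((t : ℕ) - 1)) * fderiv ℂ ξ u v := by
    rw [Finset.sum_mul]
    exact Finset.sum_congr rfl fun t _ => by ring
  rw [h4] at h3
  have := hsimple u hu
  field_simp
  linear_combination h3

/-- A simple root is smooth: its derivative is a rational expression in `u` and `ξ`, so `C^k`
regularity of `ξ` improves to `C^{k+1}`. -/
theorem root_contDiffOn {n : ℕ} {U : Set (Fin (n + 1) → ℂ)} (hU : IsOpen U)
    {ξ : (Fin (n + 1) → ℂ) → ℂ} (hξ : DifferentiableOn ℂ ξ U)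
    (hroot : ∀ u ∈ U, ∑ t : Fin (n + 1), u t * ξ u ^ (t : ℕ) = 0)
    (hsimple : ∀ u ∈ U,
      ∑ t : Fin (n + 1), ((t : ℕ) : ℂ) * u t * ξ u ^ ((t : ℕ) - 1) ≠ 0) :
    ContDiffOn ℂ ∞ ξ U := by
  rw [contDiffOn_infty]
  intro k
  induction k with
  | zero => simpa using hξ.continuousOn
  | succ k ih =>
    push_cast
    rw [contDiffOn_succ_iff_fderiv_of_isOpen hU]
    refine ⟨hξ, by simp, ?_⟩
    refine ContDiffOn.congr ?_ fun u hu => root_fderiv hU hξ hroot hsimple hu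
    refine ContDiffOn.smul (ContDiffOn.neg (ContDiffOn.inv ?_ hsimple)) ?_
    · refine ContDiffOn.sum fun t _ => ?_
      exact (contDiffOn_const.mul (contDiff_apply ℂ ℂ t).contDiffOn).mul (ih.pow _)
    · exact ContDiffOn.sum fun t _ => (ih.pow _).smul contDiffOn_const

theorem cpartialDeriv_root {n : ℕ} {U : Set (Fin (n + 1) → ℂ)} (hU : IsOpen U)
    {ξ : (Fin (n + 1) → ℂ) → ℂ} (hξ : DifferentiableOn ℂ ξ U)
    (hroot : ∀ u ∈ U, ∑ t : Fin (n + 1), u t * ξ u ^ (t : ℕ) = 0)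
    (hsimple : ∀ u ∈ U,
      ∑ t : Fin (n + 1), ((t : ℕ) : ℂ) * u t * ξ u ^ ((t : ℕ) - 1) ≠ 0)
    (i : Fin (n + 1)) {u : Fin (n + 1) → ℂ} (hu : u ∈ U) :
    cpartialDeriv i ξ u = ξ u ^ (i : ℕ) * cpartialDeriv 0 ξ u := by
  have key (a : Fin (n + 1)) : cpartialDeriv a ξ u =
      -(∑ t : Fin (n + 1), ((t : ℕ) : ℂ) * u t * ξ u ^ ((t : ℕ) - 1))⁻¹ * ξ u ^ (a : ℕ) := by
    unfold cpartialDeriv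
    rw [root_fderiv hU hξ hroot hsimple hu]
    simp [Pi.single_apply]
  rw [key, key]
  simp [mul_comm]

/-- The primitive `ξ^{s+1} / (s+1)` of `ξ^s` with respect to `ξ`. -/
noncomputable def rootPrimitive {N : ℕ} (ξ : (Fin N → ℂ) → ℂ) (s : ℕ) : (Fin N → ℂ) → ℂ :=
  fun u => ((s : ℂ) + 1)⁻¹ * ξ u ^ (s + 1)

theorem cpartialDeriv_rootPrimitive {N : ℕ} {ξ : (Fin N → ℂ) → ℂ} {u : Fin N → ℂ}
    (h : DifferentiableAt ℂ ξ u) (s : ℕ) (i : Fin N) :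
    cpartialDeriv i (rootPrimitive ξ s) u = ξ u ^ s * cpartialDeriv i ξ u := by
  have hs : (s : ℂ) + 1 ≠ 0 := Nat.cast_add_one_ne_zero s
  have hd := (h.hasFDerivAt.pow (s + 1)).const_mul ((s : ℂ) + 1)⁻¹
  have : fderiv ℂ (rootPrimitive ξ s) u = _ := hd.fderiv
  unfold cpartialDeriv
  rw [this]
  simp
  field_simp

/-- A mixed partial derivative of `ξ` depends only on the order and on the sum of the
indices. -/
theorem cpartialDerivList_root {n : ℕ} {U : Set (Fin (n + 1) → ℂ)} (hU : IsOpen U)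
    {ξ : (Fin (n + 1) → ℂ) → ℂ} (hξ : DifferentiableOn ℂ ξ U)
    (hroot : ∀ u ∈ U, ∑ t : Fin (n + 1), u t * ξ u ^ (t : ℕ) = 0)
    (hsimple : ∀ u ∈ U,
      ∑ t : Fin (n + 1), ((t : ℕ) : ℂ) * u t * ξ u ^ ((t : ℕ) - 1) ≠ 0)
    (l : List (Fin (n + 1))) :
    Set.EqOn (cpartialDerivList l ξ)
      ((cpartialDeriv 0)^[l.length] (rootPrimitive ξ (l.map Fin.val).sum)) U := by
  induction l with
  | nil => intro u _; simp [cpartialDerivList, rootPrimitive]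
  | cons i l ih =>
    have hG : ContDiffOn ℂ ∞ (rootPrimitive ξ (l.map Fin.val).sum) U :=
      contDiffOn_const.mul ((root_contDiffOn hU hξ hroot hsimple).pow _)
    refine (cpartialDeriv_congr hU ih i).trans
      ((cpartialDeriv_iterate_comm hU i 0 _ hG).trans
        (cpartialDeriv_iterate_congr hU 0 _ fun u hu => ?_))
    have hd := hξ.differentiableAt (hU.mem_nhds hu)
    rw [cpartialDeriv_rootPrimitive hd, cpartialDeriv_rootPrimitive hd,
      cpartialDeriv_root hU hξ hroot hsimple i hu, List.map_cons, List.sum_cons]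
    ring

/-- **Mayr.** Let `n ≥ 1`, `U ⊆ ℂ^{n+1}` open, and
`ξ : U → ℂ` holomorphic such that for every `u ∈ U`,
`u_0 + u_1 ξ(u) + … + u_n ξ(u)^n = 0` and
`u_1 + 2u_2 ξ(u) + … + n u_n ξ(u)^{n-1} ≠ 0` (simple root).  Then for every
`r ≥ 1` and all indices `i_1,…,i_r, j_1,…,j_r` with equal sums, the iterated
partial derivatives `∂^r ξ/∂u_{i_1}⋯∂u_{i_r}` and `∂^r ξ/∂u_{j_1}⋯∂u_{j_r}`
coincide on `U`. -/
theorem mayr_differential_equations {n : ℕ} (hn : 1 ≤ n)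
    {U : Set (Fin (n + 1) → ℂ)} (hU : IsOpen U)
    (ξ : (Fin (n + 1) → ℂ) → ℂ) (hξ : DifferentiableOn ℂ ξ U)
    (hroot : ∀ u ∈ U, ∑ t : Fin (n + 1), u t * ξ u ^ (t : ℕ) = 0)
    (hsimple : ∀ u ∈ U,
      ∑ t : Fin (n + 1), ((t : ℕ) : ℂ) * u t * ξ u ^ ((t : ℕ) - 1) ≠ 0)
    {r : ℕ} (hr : 1 ≤ r) (i j : Fin r → Fin (n + 1))
    (hij : ∑ t, ((i t : ℕ)) = ∑ t, ((j t : ℕ))) :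
    ∀ u ∈ U,
      cpartialDerivList (List.ofFn i) ξ u = cpartialDerivList (List.ofFn j) ξ u := by
  intro u hu
  rw [cpartialDerivList_root hU hξ hroot hsimple _ hu,
    cpartialDerivList_root hU hξ hroot hsimple _ hu]
  simp only [List.length_ofFn, List.map_ofFn, List.sum_ofFn, Function.comp_apply, hij]
end

section
/- Let d ≥ 1, let ω_1, …, ω_p ∈ Hom(ℤ^d, ℤ) be finitely many integral linear functionals, and let C ⊆ Hom(ℝ^d, ℝ) be the set of all linear combinations of ω_1, …, ω_p with nonnegative real coefficients. Let λ ∈ ℤ^d satisfy ω(λ) ≥ 0 for all ω ∈ C, and let C' := {ω ∈ C : ω(λ) = 0}. Define 𝕃_C := {ℓ ∈ ℤ^d : ω(ℓ) ≥ 0 for all ω ∈ C} and 𝕃_{C'} := {ℓ ∈ ℤ^d : ω(ℓ) ≥ 0 for all ω ∈ C'}. Then 𝕃_{C'} = 𝕃_C + ℤλ; that is, every ℓ ∈ 𝕃_{C'} can be written as ℓ = μ + m·λ with μ ∈ 𝕃_C and m ∈ ℤ, and conversely every such element lies in 𝕃_{C'}. -/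
/-!
Nonnegativity on `C` only has to be tested on the generators `W i`. Let `ℓ` be nonnegative on `C'`.
If `W i λ = 0`, then `W i ∈ C'`, so `W i (ℓ + n λ) = W i ℓ ≥ 0` for every `n`; otherwise
`W i λ > 0`, and `W i (ℓ + n λ) ≥ 0` for all large `n`. As there are finitely many generators, one
natural number `n` serves them all, and `ℓ = (ℓ + n λ) + (-n) λ`. Conversely, a functional in `C'`
vanishes at `λ`, so it takes the same value at `μ + m λ` as at `μ`.
-/


/-- Let `d ≥ 1`, let `ω_1, …, ω_p` be integral linear
functionals on `ℝ^d`, and let `C` be the set of their nonnegative real linear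
combinations.  Let `λ ∈ ℤ^d` satisfy `ω(λ) ≥ 0` for all `ω ∈ C`, and let
`C' := {ω ∈ C : ω(λ) = 0}`.  With `𝕃_C := {ℓ ∈ ℤ^d : ω(ℓ) ≥ 0 ∀ ω ∈ C}` and
`𝕃_{C'}` defined analogously, one has `𝕃_{C'} = 𝕃_C + ℤλ`. -/
theorem monoid_face_localization {d p : ℕ} (hd : 1 ≤ d)
    (W : Fin p → ((Fin d → ℝ) →ₗ[ℝ] ℝ))
    (hint : ∀ i, ∀ x : Fin d → ℤ, ∃ m : ℤ, W i (fun s => (x s : ℝ)) = (m : ℝ))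
    (C : Set ((Fin d → ℝ) →ₗ[ℝ] ℝ))
    (hC : C = {ω | ∃ c : Fin p → ℝ, (∀ i, 0 ≤ c i) ∧ ω = ∑ i, c i • W i})
    (lam : Fin d → ℤ) (hlam : ∀ ω ∈ C, 0 ≤ ω (fun s => (lam s : ℝ)))
    (C' : Set ((Fin d → ℝ) →ₗ[ℝ] ℝ))
    (hC' : C' = {ω ∈ C | ω (fun s => (lam s : ℝ)) = 0}) :
    ∀ ℓ : Fin d → ℤ,
      (∀ ω ∈ C', 0 ≤ ω (fun s => (ℓ s : ℝ))) ↔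
        ∃ μ : Fin d → ℤ, (∀ ω ∈ C, 0 ≤ ω (fun s => (μ s : ℝ))) ∧
          ∃ m : ℤ, ℓ = μ + m • lam := by
  have hcast : ∀ (ω : (Fin d → ℝ) →ₗ[ℝ] ℝ) (x : Fin d → ℤ) (m : ℤ),
      ω (fun s => ((x + m • lam) s : ℝ)) =
        ω (fun s => (x s : ℝ)) + m * ω (fun s => (lam s : ℝ)) := by
    intro ω x m
    rw [← smul_eq_mul, ← map_smul, ← map_add]
    congr 1
    ext s
    simp
  have hgen : ∀ i, W i ∈ C := by
    intro i
    rw [hC]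
    refine ⟨Pi.single i 1, fun j => ?_, ?_⟩
    · by_cases h : j = i
      · subst h; simp
      · simp [h]
    · simp [Pi.single_apply]
  intro ℓ
  constructor
  · intro h
    have key : ∀ i, ∃ n : ℕ, 0 ≤ W i (fun s => (ℓ s : ℝ)) + n * W i (fun s => (lam s : ℝ)) := by
      intro i
      rcases (hlam _ (hgen i)).eq_or_lt with h0 | hpos
      · have hi : W i ∈ C' := by
          rw [hC']
          exact ⟨hgen i, h0.symm⟩
        exact ⟨0, by simpa using h _ hi⟩
      · obtain ⟨n, hn⟩ := exists_nat_ge (-W i (fun s => (ℓ s : ℝ)) / W i (fun s => (lam s : ℝ)))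
        rw [div_le_iff₀ hpos] at hn
        exact ⟨n, by linarith⟩
    choose n hn using key
    refine ⟨ℓ + ((∑ i, n i : ℕ) : ℤ) • lam, ?_, -((∑ i, n i : ℕ) : ℤ), ?_⟩
    · intro ω hω
      rw [hC] at hω
      obtain ⟨c, hc, rfl⟩ := hω
      rw [LinearMap.sum_apply]
      refine Finset.sum_nonneg fun i _ => ?_
      rw [LinearMap.smul_apply, hcast, Int.cast_natCast]
      refine smul_nonneg (hc i) ((hn i).trans ?_)
      have hle : n i ≤ ∑ j, n j :=
        Finset.single_le_sum (fun j _ => Nat.zero_le (n j)) (Finset.mem_univ i)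
      have := mul_le_mul_of_nonneg_right (Nat.cast_le (α := ℝ).mpr hle) (hlam _ (hgen i))
      linarith
    · rw [neg_smul, add_neg_cancel_right]
  · rintro ⟨μ, hμ, m, rfl⟩ ω hω
    rw [hC'] at hω
    rw [hcast, hω.2, mul_zero, add_zero]
    exact hμ ω hω.1
end

section
/- Let a_1, …, a_N ∈ ℤ^{k+1} and suppose h ∈ ℝ^{k+1} satisfies a_j·h = 1 for all j. Fix a direct sum decomposition ℝ^{k+1} = M° ⊕ ℝh into linear subspaces. For α = (α_1, …, α_N) ∈ ℝ^N define K_α := {v ∈ ℝ^{k+1} : a_j·v ≥ −α_j for all j} and μ_α : M° → ℝ, μ_α(u) := min_{1 ≤ j ≤ N} (a_j·u + α_j). Then for every u ∈ M° the point u − μ_α(u)·h lies in the topological frontier ∂K_α of K_α, and moreover ∂K_α = {u − μ_α(u)·h : u ∈ M°}; i.e. ∂K_α is the graph of the function −μ_α over M°. -/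
/-! Since `a_j·h = 1`, the function `μ` satisfies `μ (x + t h) = μ x + t`, and `K = {μ ≥ 0}`.
The frontier of `K` is the zero set of `μ`: where `μ > 0` all finitely many defining inequalities
are strict, an open condition, while at a zero `x` of `μ` the points `x - t h` with `t > 0` have
`μ = -t < 0`, so they lie outside `K` and accumulate at `x`. Writing `x = u + c h` with `u ∈ M`,
the equation `μ x = 0` reads `c = -μ u`, which is the claimed graph. -/

open Filter Topology

/-- Let `a_1, …, a_N ∈ ℤ^{k+1}` and `h ∈ ℝ^{k+1}` with
`a_j·h = 1` for all `j`.  Fix a direct sum decomposition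
`ℝ^{k+1} = M° ⊕ ℝh`.  For `α ∈ ℝ^N` let
`K_α = {v : a_j·v ≥ −α_j ∀ j}` and `μ_α(u) = min_j (a_j·u + α_j)`.  Then for
every `u ∈ M°` the point `u − μ_α(u)·h` lies in the frontier `∂K_α`, and
moreover `∂K_α = {u − μ_α(u)·h : u ∈ M°}`. -/
theorem frontier_is_graph_of_min {k N : ℕ} (hN : 0 < N)
    (a : Fin N → Fin (k + 1) → ℤ)
    (hvec : Fin (k + 1) → ℝ) (hh : ∀ j, ∑ i, (a j i : ℝ) * hvec i = 1)
    (M : Submodule ℝ (Fin (k + 1) → ℝ))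
    (hcompl : IsCompl M (Submodule.span ℝ {hvec}))
    (α : Fin N → ℝ)
    (K : Set (Fin (k + 1) → ℝ))
    (hK : K = {v | ∀ j, -α j ≤ ∑ i, (a j i : ℝ) * v i})
    (μ : (Fin (k + 1) → ℝ) → ℝ)
    (hμ : ∀ u, (∀ j, μ u ≤ (∑ i, (a j i : ℝ) * u i) + α j) ∧
      ∃ j, μ u = (∑ i, (a j i : ℝ) * u i) + α j) :
    (∀ u ∈ M, u - μ u • hvec ∈ frontier K) ∧
      frontier K = {x | ∃ u ∈ M, x = u - μ u • hvec} := by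
  have hlin : ∀ j u t, ∑ i, (a j i : ℝ) * (u + t • hvec) i
      = (∑ i, (a j i : ℝ) * u i) + t := by
    intro j u t
    have h1 : ∀ i, (a j i : ℝ) * (u + t • hvec) i
        = (a j i : ℝ) * u i + t * ((a j i : ℝ) * hvec i) := by
      intro i
      simp only [Pi.add_apply, Pi.smul_apply, smul_eq_mul]
      ring
    rw [Finset.sum_congr rfl fun i _ => h1 i, Finset.sum_add_distrib, ← Finset.mul_sum, hh j,
      mul_one]
  have hμadd : ∀ u t, μ (u + t • hvec) = μ u + t := by
    intro u t
    obtain ⟨h1, j, hj⟩ := hμ u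
    obtain ⟨h2, l, hl⟩ := hμ (u + t • hvec)
    have h3 := h1 l
    have h4 := h2 j
    rw [hlin] at hl h4
    linarith
  have hmem : ∀ x, x ∈ K ↔ 0 ≤ μ x := by
    intro x
    obtain ⟨h1, j, hj⟩ := hμ x
    rw [hK]
    constructor
    · intro h
      have := h j
      linarith
    · intro h l
      have := h1 l
      linarith
  have hcont : ∀ j, Continuous fun v : Fin (k + 1) → ℝ => ∑ i, (a j i : ℝ) * v i := by
    intro j
    fun_prop
  have hclosed : IsClosed K := by
    rw [hK, Set.ofPred_forall]
    exact isClosed_iInter fun j => isClosed_le continuous_const (hcont j)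
  have hfr : ∀ x, x ∈ frontier K ↔ μ x = 0 := by
    intro x
    rw [hclosed.frontier_eq, Set.mem_diff, hmem]
    constructor
    · rintro ⟨h0, hint⟩
      by_contra hne
      have hpos : 0 < μ x := lt_of_le_of_ne h0 (Ne.symm hne)
      apply hint
      rw [mem_interior_iff_mem_nhds]
      have hev : ∀ᶠ v in 𝓝 x, ∀ j, -α j < ∑ i, (a j i : ℝ) * v i := by
        rw [eventually_all]
        intro j
        apply (hcont j).continuousAt.eventually_const_lt
        have := (hμ x).1 j
        linarith
      filter_upwards [hev] with v hv
      rw [hK]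
      exact fun j => (hv j).le
    · intro h0
      refine ⟨h0.ge, fun hint => ?_⟩
      have hpath : Tendsto (fun t : ℝ => x + t • hvec) (𝓝[<] 0) (𝓝 x) := by
        have hc : Continuous fun t : ℝ => x + t • hvec := by fun_prop
        have := hc.tendsto 0
        simp only [zero_smul, add_zero] at this
        exact this.mono_left nhdsWithin_le_nhds
      have hev := hpath.eventually (mem_interior_iff_mem_nhds.1 hint)
      obtain ⟨t, ht, htneg⟩ := (hev.and self_mem_nhdsWithin).exists
      have h1 : 0 ≤ μ (x + t • hvec) := (hmem _).1 ht
      have h2 : t < 0 := htneg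
      rw [hμadd] at h1
      linarith
  have hgraph : ∀ u, u - μ u • hvec ∈ frontier K := by
    intro u
    rw [hfr, sub_eq_add_neg, ← neg_smul, hμadd, add_neg_cancel]
  refine ⟨fun u _ => hgraph u, ?_⟩
  ext x
  constructor
  · intro hx
    rw [hfr] at hx
    have htop : x ∈ M ⊔ Submodule.span ℝ {hvec} := by
      rw [hcompl.sup_eq_top]
      exact Submodule.mem_top
    obtain ⟨u, hu, w, hw, rfl⟩ := Submodule.mem_sup.1 htop
    obtain ⟨c, rfl⟩ := Submodule.mem_span_singleton.1 hw
    rw [hμadd] at hx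
    refine ⟨u, hu, ?_⟩
    rw [eq_neg_of_add_eq_zero_right hx, neg_smul, sub_eq_add_neg]
  · rintro ⟨u, _, rfl⟩
    exact hgraph u
end

section
/- Let a_1, …, a_N ∈ ℤ^{k+1} span ℝ^{k+1} and suppose there exists h ∈ ℝ^{k+1} with a_j·h = 1 for all j. Let α = (α_1, …, α_N) ∈ ℝ^N with α_j > 0 for all j, let K_α := {v ∈ ℝ^{k+1} : a_j·v ≥ −α_j for all j}, and define the dual K_α^∨ := {w ∈ ℝ^{k+1} : w·v ≥ −1 for all v ∈ K_α}. Then K_α^∨ equals the convex hull of the finite set {0, a_1/α_1, …, a_N/α_N}. -/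
/-!
This is the bipolar theorem for the finite set `{0, a_1/α_1, …, a_N/α_N}`. Its convex hull `C` lies
in the dual of `K` because the dual is convex and contains each of these points. Conversely, `C` is
closed, so a point `w ∉ C` is strictly separated from `C` by a linear functional `f` and a level `u`,
with `f w < u < f` on `C`. Since `0 ∈ C`, `u` is negative; the vector representing `f / (-u)` then
lies in `K` and pairs with `w` to less than `-1`.
-/

/-- Let `a_1, …, a_N ∈ ℤ^{k+1}` span `ℝ^{k+1}` with
`h ∈ ℝ^{k+1}` satisfying `a_j·h = 1` for all `j`.  For `α ∈ ℝ^N` with all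
`α_j > 0`, let `K_α = {v : a_j·v ≥ −α_j ∀ j}` and
`K_α^∨ = {w : w·v ≥ −1 ∀ v ∈ K_α}`.  Then
`K_α^∨ = conv{0, a_1/α_1, …, a_N/α_N}`. -/
theorem dual_polyhedron_eq_convexHull {k N : ℕ} (hN : 0 < N)
    (a : Fin N → Fin (k + 1) → ℤ)
    (hspan : Submodule.span ℝ (Set.range fun j => fun i => (a j i : ℝ)) = ⊤)
    (hvec : Fin (k + 1) → ℝ) (hh : ∀ j, ∑ i, (a j i : ℝ) * hvec i = 1)
    (α : Fin N → ℝ) (hα : ∀ j, 0 < α j)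
    (K : Set (Fin (k + 1) → ℝ))
    (hK : K = {v | ∀ j, -α j ≤ ∑ i, (a j i : ℝ) * v i}) :
    {w : Fin (k + 1) → ℝ | ∀ v ∈ K, -1 ≤ ∑ i, w i * v i} =
      convexHull ℝ
        (insert 0 (Set.range fun j => (α j)⁻¹ • fun i => (a j i : ℝ))) := by
  subst hK
  apply Set.Subset.antisymm
  · intro w hw
    by_contra hwC
    obtain ⟨f, u, hfw, hfC⟩ := geometric_hahn_banach_point_closed (convex_convexHull ℝ _)
      (((Set.finite_range _).insert 0).isClosed_convexHull ℝ) hwC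
    have hu : u < 0 := by
      simpa using hfC 0 (subset_convexHull ℝ _ (Set.mem_insert _ _))
    have hf : ∀ x : Fin (k + 1) → ℝ,
        ∑ i, x i * ((-u)⁻¹ * f (Pi.single i 1)) = (-u)⁻¹ * f x := by
      intro x
      conv_rhs => rw [pi_eq_sum_univ' x]
      rw [map_sum, Finset.mul_sum]
      refine Finset.sum_congr rfl fun i _ => ?_
      rw [map_smul, smul_eq_mul, mul_left_comm]
    have hu' : 0 < -u := neg_pos.2 hu
    have hwv := hw (fun i => (-u)⁻¹ * f (Pi.single i 1)) (by
      intro j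
      have hj := hfC _ (subset_convexHull ℝ _ (Set.mem_insert_of_mem _ (Set.mem_range_self j)))
      rw [map_smul, smul_eq_mul, inv_mul_eq_div, lt_div_iff₀ (hα j)] at hj
      rw [hf fun i => (a j i : ℝ), inv_mul_eq_div, le_div_iff₀ hu']
      linarith)
    rw [hf w, inv_mul_eq_div, le_div_iff₀ hu'] at hwv
    linarith
  · refine convexHull_min ?_ ?_
    · rintro _ (rfl | ⟨j, rfl⟩) v hv
      · simp
      · have hj := hv j
        simp only [Pi.smul_apply, smul_eq_mul, mul_assoc]
        rw [← Finset.mul_sum, inv_mul_eq_div, le_div_iff₀ (hα j)]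
        linarith
    · intro x hx y hy s t hs ht hst v hv
      have hsum : ∑ i, (s • x + t • y) i * v i = s * ∑ i, x i * v i + t * ∑ i, y i * v i := by
        simp only [Finset.mul_sum, ← Finset.sum_add_distrib, Pi.add_apply, Pi.smul_apply,
          smul_eq_mul]
        exact Finset.sum_congr rfl fun i _ => by ring
      rw [hsum]
      nlinarith [mul_le_mul_of_nonneg_left (hx v hv) hs, mul_le_mul_of_nonneg_left (hy v hv) ht]
end

section
/- Let J ⊆ {1, …, N} have k+1 elements with the vectors a_j, j ∈ J, linearly independent over ℝ, let 𝕃_J := {ℓ ∈ 𝕃 : ℓ_j ≥ 0 for all j ∈ J'}, and let γ = (γ_1, …, γ_N) ∈ ℂ^N satisfy γ_j ∈ ℤ_{≤0} for all j ∈ J'. Then there exists a real constant c such that for every w ∈ ℂ^N with Im(w·ℓ) > c for every nonzero ℓ ∈ 𝕃_J, the family indexed by ℓ ∈ 𝕃 sending ℓ to e^{2πi·w·(γ+ℓ)}·∏_{j=1}^N 1/Γ(γ_j + ℓ_j + 1) is absolutely summable; in particular the Fourier Γ-series Ψ_{𝕃,γ}(w) := ∑_{ℓ ∈ 𝕃}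 e^{2πi·w·(γ+ℓ)} ∏_{j=1}^N 1/Γ(γ_j + ℓ_j + 1) converges absolutely for all such w. -/
/-!
Only relations `ℓ ∈ 𝕃_J` contribute: if `ℓ_j < 0` for some `j ∉ J`, then `γ_j + ℓ_j + 1` is a
nonpositive integer and the reciprocal Gamma factor vanishes. On `𝕃_J` two estimates compete,
both in terms of the `ℓ¹`-norm `|ℓ| = ∑ |ℓ_j|`.

* The Gamma product grows at most geometrically. The functional equation bounds each factor
  `1/Γ(γ_j + n + 1)` by `C R^|n| n⁻! / n⁺!` (`inv_gamma_bound`), where `n⁺`, `n⁻` are the positive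
  and negative parts. Applying `h` to the relation gives `∑ ℓ_j = 0`, so the factorial quotients
  multiply to at most a multinomial coefficient, hence to at most `(N + 1)^|ℓ|` (`fac_prod_le`).
* The exponential decays geometrically, at a rate proportional to `c` (`lin_lower`). By Cramer's
  rule there is, for each `j ∉ J`, an element `b_j` of `𝕃_J` whose coordinates outside `J` are all
  zero except for a common positive entry `D` in place `j` (`exists_basis`). By linear independence
  of the `a_j`, `j ∈ J`, every relation satisfies `D ℓ = ∑_{j ∉ J} ℓ_j b_j`. So `Im (w · b_j) > c`
  for these finitely many `b_j` gives `Im (w · ℓ) ≥ c δ |ℓ|` on `𝕃_J` for a fixed `δ > 0`.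

Choosing `c` so large that the second beats the first by a factor `2^|ℓ|` dominates the series by a
constant times `∏_j (1/2)^|ℓ_j|`, which is summable over all of `ℤ^N` (`summable_pi_geom`).
-/

/-- If `∑ ℓ_j = 0`, the positive and negative parts of `ℓ` have the same sum `n`, and the product
of factorial quotients is at most the multinomial coefficient `n! / ∏ ℓ_j⁺!`, one of the summands of
`N ^ n = (1 + ⋯ + 1) ^ n`. -/
theorem fac_prod_le {N : ℕ} (ℓ : Fin N → ℤ) (h0 : ∑ j, ℓ j = 0) :
    ∏ j, (((-ℓ j).toNat.factorial : ℝ) / ((ℓ j).toNat.factorial : ℝ)) ≤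
      (N + 1 : ℝ) ^ ∑ j, (ℓ j).natAbs := by
  have hsum : ∑ j, (-ℓ j).toNat = ∑ j, (ℓ j).toNat := by
    zify
    rw [← sub_eq_zero, ← Finset.sum_sub_distrib, ← neg_eq_zero, ← Finset.sum_neg_distrib, ← h0]
    exact Finset.sum_congr rfl fun j _ => by omega
  have h1 : ∏ j, (-ℓ j).toNat.factorial ≤ (∑ j, (ℓ j).toNat).factorial := by
    rw [← hsum]
    exact Nat.le_of_dvd (Nat.factorial_pos _) (Nat.prod_factorial_dvd_factorial_sum _ _)
  have h2 : Nat.multinomial Finset.univ (fun j => (ℓ j).toNat) ≤ N ^ ∑ j, (ℓ j).toNat := by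
    have := Finset.sum_pow_eq_sum_piAntidiag (R := ℕ) (Finset.univ : Finset (Fin N)) (fun _ => 1)
      (∑ j, (ℓ j).toNat)
    simp only [Finset.sum_const, Finset.card_univ, Fintype.card_fin, smul_eq_mul, mul_one,
      one_pow, Finset.prod_const_one, Nat.cast_id] at this
    rw [this]
    exact Finset.single_le_sum (f := fun k => Nat.multinomial Finset.univ k)
      (fun _ _ => Nat.zero_le _) (by simp)
  have h3 : ∏ j, (-ℓ j).toNat.factorial ≤
      (∏ j, (ℓ j).toNat.factorial) * (N + 1) ^ ∑ j, (ℓ j).natAbs := by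
    refine h1.trans ?_
    rw [← Nat.multinomial_spec]
    refine Nat.mul_le_mul_left _ (h2.trans ?_)
    calc N ^ ∑ j, (ℓ j).toNat ≤ (N + 1) ^ ∑ j, (ℓ j).toNat :=
          Nat.pow_le_pow_left (Nat.le_succ N) _
      _ ≤ _ := Nat.pow_le_pow_right (Nat.succ_pos N)
          (Finset.sum_le_sum fun j _ => by omega)
  rw [Finset.prod_div_distrib, div_le_iff₀ (by positivity), mul_comm]
  exact_mod_cast h3

/-- Growth of `1/Γ` along `γ + ℤ`. No assumption on `γ` is needed: it may be an integer, in which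
case some of the values are zero. -/
theorem inv_gamma_bound (γ : ℂ) : ∃ C R : ℝ, 1 ≤ R ∧ 0 ≤ C ∧ ∀ n : ℤ,
    ‖(Complex.Gamma (γ + (n : ℂ) + 1))⁻¹‖ ≤
      C * R ^ n.natAbs * (((-n).toNat.factorial : ℝ) / (n.toNat.factorial : ℝ)) := by
  set f : ℤ → ℝ := fun n => ‖(Complex.Gamma (γ + (n : ℂ) + 1))⁻¹‖ with hf
  have f0 : ∀ n, 0 ≤ f n := fun n => norm_nonneg _
  have hrec : ∀ n : ℤ, f n = ‖γ + (n : ℂ) + 1‖ * f (n + 1) := by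
    intro n
    have := Complex.one_div_Gamma_eq_self_mul_one_div_Gamma_add_one (γ + (n : ℂ) + 1)
    simp only [hf]
    rw [this, norm_mul]
    push_cast
    ring_nf
  set R : ℝ := ‖γ‖ + 2 with hR
  have hR2 : 2 ≤ R := by have := norm_nonneg γ; linarith
  -- Each unit step to the left multiplies by at most `‖γ‖ + m ≤ R (m + 1)`.
  have hneg : ∀ m : ℕ, f (-(m : ℤ)) ≤ f 0 * R ^ m * m.factorial := by
    intro m
    induction m with
    | zero => simp
    | succ m ih =>
      have h1 := hrec (-((m + 1 : ℕ) : ℤ))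
      have e : -((m + 1 : ℕ) : ℤ) + 1 = -(m : ℤ) := by push_cast; ring
      rw [e] at h1
      rw [h1]
      have h2 : ‖γ + ((-((m + 1 : ℕ) : ℤ) : ℤ) : ℂ) + 1‖ ≤ R * (m + 1) := by
        have : γ + ((-((m + 1 : ℕ) : ℤ) : ℤ) : ℂ) + 1 = γ - (m : ℂ) := by push_cast; ring
        rw [this]
        refine (norm_sub_le _ _).trans ?_
        rw [Complex.norm_natCast, hR]
        have := norm_nonneg γ
        have : (0 : ℝ) ≤ m := Nat.cast_nonneg m
        nlinarith [mul_nonneg (norm_nonneg γ) this]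
      calc _ ≤ (R * (m + 1)) * (f 0 * R ^ m * m.factorial) :=
            mul_le_mul h2 ih (f0 _) (by positivity)
        _ = _ := by rw [Nat.factorial_succ]; push_cast; ring
  -- To the right, `‖γ + n + 1‖ ≥ (n + 1) / 2` for `n ≥ 2 ‖γ‖`, so the normalised sequence `g` is
  -- eventually nonincreasing. The finitely many earlier terms, where `γ + n + 1` may vanish, only
  -- affect the constant.
  set g : ℕ → ℝ := fun n => f n * n.factorial / R ^ n with hg
  have g0 : ∀ n, 0 ≤ g n := fun n => by
    have := f0 n
    simp only [hg]; positivity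
  obtain ⟨n₀, hn₀⟩ := exists_nat_ge (2 * ‖γ‖)
  have hstep : ∀ n, n₀ ≤ n → g (n + 1) ≤ g n := by
    intro n hn
    have h1 := hrec (n : ℤ)
    have h2 : ((n : ℝ) + 1) / 2 ≤ ‖γ + ((n : ℤ) : ℂ) + 1‖ := by
      have h3 : ‖((n + 1 : ℕ) : ℂ)‖ ≤ ‖γ + ((n : ℤ) : ℂ) + 1‖ + ‖γ‖ := by
        refine le_trans (le_of_eq ?_) (norm_sub_le _ _)
        congr 1; push_cast; ring
      rw [Complex.norm_natCast] at h3
      push_cast at h3 ⊢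
      have : (n₀ : ℝ) ≤ n := by exact_mod_cast hn
      linarith
    have h4 : f ((n : ℤ) + 1) * (n + 1) ≤ R * f n := by
      rw [h1]
      have := mul_le_mul_of_nonneg_right h2 (f0 ((n : ℤ) + 1))
      have h5 : 0 ≤ ‖γ + ((n : ℤ) : ℂ) + 1‖ * f ((n : ℤ) + 1) := mul_nonneg (norm_nonneg _) (f0 _)
      nlinarith
    simp only [hg]
    rw [div_le_div_iff₀ (by positivity) (by positivity), Nat.factorial_succ]
    push_cast
    calc _ = (f ((n : ℤ) + 1) * (n + 1)) * (n.factorial * R ^ n) := by ring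
      _ ≤ (R * f n) * (n.factorial * R ^ n) := mul_le_mul_of_nonneg_right h4 (by positivity)
      _ = _ := by ring
  set C₁ : ℝ := ∑ i ∈ Finset.range (n₀ + 1), g i with hC₁
  have hsmall : ∀ n, n ≤ n₀ → g n ≤ C₁ := fun n hn =>
    Finset.single_le_sum (fun i _ => g0 i) (Finset.mem_range.2 (Nat.lt_succ_of_le hn))
  have hpos : ∀ n, g n ≤ C₁ := by
    intro n
    rcases le_total n n₀ with hn | hn
    · exact hsmall n hn
    · induction n, hn using Nat.le_induction with
      | base => exact hsmall _ le_rfl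
      | succ n hn ih => exact (hstep n hn).trans ih
  have hC₁0 : 0 ≤ C₁ := Finset.sum_nonneg fun i _ => g0 i
  refine ⟨f 0 + C₁, R, by linarith, add_nonneg (f0 0) hC₁0, fun n => ?_⟩
  change f n ≤ _
  obtain ⟨m, rfl | rfl⟩ := n.eq_nat_or_neg
  · have h1 := hpos m
    simp only [hg] at h1
    rw [div_le_iff₀ (by positivity)] at h1
    have : (-(m : ℤ)).toNat = 0 := by omega
    rw [this, Int.toNat_natCast, Int.natAbs_natCast, Nat.factorial_zero, Nat.cast_one, ← mul_div_assoc,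
      mul_one, le_div_iff₀ (by positivity)]
    have := mul_nonneg (f0 0) (by positivity : 0 ≤ R ^ m)
    linarith
  · have h1 := hneg m
    have : (-(m : ℤ)).toNat = 0 := by omega
    rw [this, neg_neg, Int.toNat_natCast, Int.natAbs_neg, Int.natAbs_natCast, Nat.factorial_zero,
      Nat.cast_one, div_one]
    refine h1.trans ?_
    gcongr
    linarith

theorem summable_pi_geom (N : ℕ) :
    Summable fun ℓ : Fin N → ℤ => ∏ j, ((1 / 2 : ℝ) ^ (ℓ j).natAbs) := by
  have h1 : Summable fun n : ℤ => (1 / 2 : ℝ) ^ n.natAbs := by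
    apply Summable.of_nat_of_neg <;> simpa using summable_geometric_two
  induction N with
  | zero => exact Summable.of_finite
  | succ N ih =>
    rw [← (Fin.consEquiv fun _ : Fin (N + 1) => ℤ).summable_iff]
    have := h1.mul_of_nonneg ih (fun _ => by positivity)
      (fun _ => Finset.prod_nonneg fun _ _ => by positivity)
    refine this.congr fun p => ?_
    simp [Fin.consEquiv, Fin.prod_univ_succ, mul_comm]

/-- A `ℚ`-basis of the relation lattice: for each `j ∉ J`, a relation with entry `D > 0` at `j` and
`0` at the other places outside `J`. It comes from Cramer's rule for the matrix with rows `a_i`,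
`i ∈ J`; `b j` carries no information when `j ∈ J`. -/
theorem exists_basis {k N : ℕ} (a : Fin N → Fin (k + 1) → ℤ)
    (J : Finset (Fin N)) (hJcard : J.card = k + 1)
    (hJind : LinearIndependent ℝ fun j : J => fun i => (a (j : Fin N) i : ℝ)) :
    ∃ (D : ℤ) (b : Fin N → Fin N → ℤ), 0 < D ∧
      ∀ j ∉ J, (∑ i, b j i • a i = 0) ∧ ∀ i ∉ J, b j i = if i = j then D else 0 := by
  let e : Fin (k + 1) ≃ J := (J.equivFinOfCardEq hJcard).symm
  let A : Matrix (Fin (k + 1)) (Fin (k + 1)) ℤ := Matrix.of fun p i => a (e p) i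
  have hdet : A.det ≠ 0 := by
    have h1 : LinearIndependent ℝ (A.map (Int.cast : ℤ → ℝ)).row :=
      hJind.comp e e.injective
    rw [Matrix.linearIndependent_rows_iff_isUnit, Matrix.isUnit_iff_isUnit_det] at h1
    intro h0
    apply h1.ne_zero
    have := (Int.castRingHom ℝ).map_det A
    rw [h0] at this
    simpa using this.symm
  -- The determinant may be negative, so its square serves as the common entry `D`.
  refine ⟨A.det ^ 2, fun j i => if hi : i ∈ J then
    -(A.det * Matrix.vecMul (a j) A.adjugate (e.symm ⟨i, hi⟩)) else if i = j then A.det ^ 2 else 0,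
    by positivity, fun j hj => ⟨?_, fun i hi => by simp [hi]⟩⟩
  have key : ∑ p, Matrix.vecMul (a j) A.adjugate p • a (e p) = A.det • a j := by
    have h1 : Matrix.vecMul (Matrix.vecMul (a j) A.adjugate) A = A.det • a j := by
      rw [Matrix.vecMul_vecMul, Matrix.adjugate_mul, Matrix.vecMul_smul, Matrix.vecMul_one]
    rw [← h1, Matrix.vecMul_eq_sum (Matrix.vecMul (a j) A.adjugate) A]
    rfl
  rw [← Finset.sum_add_sum_compl J]
  have hJ : ∑ i ∈ J, (if hi : i ∈ J then
      -(A.det * Matrix.vecMul (a j) A.adjugate (e.symm ⟨i, hi⟩)) else if i = j then A.det ^ 2 else 0)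
        • a i = - (A.det ^ 2 • a j) := by
    rw [← Finset.sum_coe_sort, ← e.sum_comp]
    simp only [Finset.coe_mem, dite_true, Subtype.coe_eta, Equiv.symm_apply_apply, neg_smul,
      mul_smul, Finset.sum_neg_distrib, ← Finset.smul_sum, key, pow_two]
  rw [hJ, Finset.sum_eq_single j]
  · simp [hj]
  · intro i hi hij
    simp [Finset.mem_compl.1 hi, hij]
  · intro h; simp [hj] at h

/-- A real linear form exceeding `c ≥ 0` on the nonzero elements of `𝕃_J` is at least
`c δ ∑ |ℓ_j|` on `𝕃_J`, with `δ > 0` independent of `c` and of the form. -/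
theorem lin_lower {k N : ℕ} (a : Fin N → Fin (k + 1) → ℤ)
    (J : Finset (Fin N)) (hJcard : J.card = k + 1)
    (hJind : LinearIndependent ℝ fun j : J => fun i => (a (j : Fin N) i : ℝ)) :
    ∃ δ : ℝ, 0 < δ ∧ ∀ c : ℝ, 0 ≤ c → ∀ y : Fin N → ℝ,
      (∀ ℓ : Fin N → ℤ, ∑ j, ℓ j • a j = 0 → (∀ j ∉ J, 0 ≤ ℓ j) → ℓ ≠ 0 →
        c < ∑ j, y j * (ℓ j : ℝ)) →
      ∀ ℓ : Fin N → ℤ, ∑ j, ℓ j • a j = 0 → (∀ j ∉ J, 0 ≤ ℓ j) →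
        c * δ * ((∑ j, (ℓ j).natAbs : ℕ) : ℝ) ≤ ∑ j, y j * (ℓ j : ℝ) := by
  obtain ⟨D, b, hD, hb⟩ := exists_basis a J hJcard hJind
  -- The difference of the two sides is a relation supported on `J`, hence zero by independence.
  have hrep : ∀ ℓ : Fin N → ℤ, ∑ j, ℓ j • a j = 0 →
      ∀ i, D * ℓ i = ∑ j ∈ Jᶜ, ℓ j * b j i := by
    intro ℓ hℓ
    set d : Fin N → ℤ := fun i => D * ℓ i - ∑ j ∈ Jᶜ, ℓ j * b j i with hd
    have hd0 : ∀ i ∉ J, d i = 0 := by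
      intro i hi
      have : ∑ j ∈ Jᶜ, ℓ j * b j i = ℓ i * D := by
        rw [Finset.sum_eq_single i]
        · rw [(hb i hi).2 i hi, if_pos rfl]
        · intro j hj hji
          rw [(hb j (Finset.mem_compl.1 hj)).2 i hi, if_neg hji.symm, mul_zero]
        · intro h; exact absurd (Finset.mem_compl.2 hi) h
      simp only [hd, this]; ring
    have hdL : ∑ i, d i • a i = 0 := by
      simp only [hd, sub_smul, Finset.sum_sub_distrib, mul_smul, Finset.sum_smul]
      rw [← Finset.smul_sum, hℓ, smul_zero, Finset.sum_comm, zero_sub, neg_eq_zero]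
      refine Finset.sum_eq_zero fun j hj => ?_
      rw [← Finset.smul_sum, (hb j (Finset.mem_compl.1 hj)).1, smul_zero]
    have hdJ : ∀ i : J, (d i : ℝ) = 0 := by
      refine Fintype.linearIndependent_iff.1 hJind (fun i => (d i : ℝ)) ?_
      rw [← Finset.sum_subset (Finset.subset_univ J)
        (fun i _ hi => by rw [hd0 i hi, zero_smul]), ← Finset.sum_coe_sort] at hdL
      ext p
      have := congrFun hdL p
      simp only [Finset.sum_apply, Pi.smul_apply, smul_eq_mul, Pi.zero_apply] at this ⊢
      exact_mod_cast this
    intro i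
    have : d i = 0 := by
      by_cases hi : i ∈ J
      · exact_mod_cast hdJ ⟨i, hi⟩
      · exact hd0 i hi
    simp only [hd] at this
    linarith
  set M : ℤ := 1 + ∑ j, ∑ i, |b j i| with hM
  have hsum0 : 0 ≤ ∑ j, ∑ i, |b j i| :=
    Finset.sum_nonneg fun j _ => Finset.sum_nonneg fun i _ => abs_nonneg _
  have hM0 : 0 < M := by omega
  have hMr : (0 : ℝ) < M := by exact_mod_cast hM0
  refine ⟨(M : ℝ)⁻¹, inv_pos.2 hMr, fun c hc y hy ℓ hℓ hℓJ => ?_⟩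
  have hDr : (0 : ℝ) < D := by exact_mod_cast hD
  have h1 : D * ((∑ j, (ℓ j).natAbs : ℕ) : ℤ) ≤ M * ∑ j ∈ Jᶜ, ℓ j := by
    push_cast
    rw [Finset.mul_sum]
    calc ∑ i, D * |ℓ i| = ∑ i, |∑ j ∈ Jᶜ, ℓ j * b j i| := by
          refine Finset.sum_congr rfl fun i _ => ?_
          rw [← hrep ℓ hℓ i, abs_mul, abs_of_pos hD]
      _ ≤ ∑ i, ∑ j ∈ Jᶜ, ℓ j * |b j i| := by
          refine Finset.sum_le_sum fun i _ => (Finset.abs_sum_le_sum_abs _ _).trans ?_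
          refine Finset.sum_le_sum fun j hj => ?_
          rw [abs_mul, abs_of_nonneg (hℓJ j (Finset.mem_compl.1 hj))]
      _ = ∑ j ∈ Jᶜ, ℓ j * ∑ i, |b j i| := by
          rw [Finset.sum_comm]; simp only [Finset.mul_sum]
      _ ≤ ∑ j ∈ Jᶜ, ℓ j * M := by
          refine Finset.sum_le_sum fun j hj => ?_
          refine mul_le_mul_of_nonneg_left ?_ (hℓJ j (Finset.mem_compl.1 hj))
          have := Finset.single_le_sum (f := fun j => ∑ i, |b j i|)
            (fun j _ => Finset.sum_nonneg fun i _ => abs_nonneg _) (Finset.mem_univ j)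
          rw [hM]
          exact this.trans (by omega)
      _ = _ := by rw [← Finset.sum_mul, mul_comm]
  have h1r : (D : ℝ) * ((∑ j, (ℓ j).natAbs : ℕ) : ℝ) ≤ M * ∑ j ∈ Jᶜ, (ℓ j : ℝ) := by
    have h1' := (Int.cast_le (R := ℝ)).2 h1
    rw [Int.cast_mul, Int.cast_mul, Int.cast_sum, Int.cast_natCast] at h1'
    exact h1'
  have h2 : c * ∑ j ∈ Jᶜ, (ℓ j : ℝ) ≤ D * ∑ i, y i * (ℓ i : ℝ) := by
    calc c * ∑ j ∈ Jᶜ, (ℓ j : ℝ) = ∑ j ∈ Jᶜ, (ℓ j : ℝ) * c := by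
          rw [Finset.mul_sum]; simp only [mul_comm]
      _ ≤ ∑ j ∈ Jᶜ, (ℓ j : ℝ) * ∑ i, y i * (b j i : ℝ) := by
          refine Finset.sum_le_sum fun j hj => ?_
          have hj' := Finset.mem_compl.1 hj
          refine mul_le_mul_of_nonneg_left (le_of_lt (hy (b j) (hb j hj').1 ?_ ?_))
            (by exact_mod_cast hℓJ j hj')
          · intro i hi
            rw [(hb j hj').2 i hi]
            split_ifs <;> omega
          · intro h0
            have := (hb j hj').2 j hj'
            rw [h0, if_pos rfl] at this
            exact hD.ne this
      _ = ∑ i, y i * ∑ j ∈ Jᶜ, (ℓ j : ℝ) * (b j i : ℝ) := by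
          simp only [Finset.mul_sum]
          rw [Finset.sum_comm]
          exact Finset.sum_congr rfl fun i _ => Finset.sum_congr rfl fun j _ => by ring
      _ = ∑ i, y i * (D * (ℓ i : ℝ)) := by
          refine Finset.sum_congr rfl fun i _ => ?_
          congr 1
          have := hrep ℓ hℓ i
          exact_mod_cast this.symm
      _ = _ := by
          rw [Finset.mul_sum]
          exact Finset.sum_congr rfl fun i _ => by ring
  have h3 : c * ((D : ℝ) * ((∑ j, (ℓ j).natAbs : ℕ) : ℝ)) ≤
      M * (D * ∑ i, y i * (ℓ i : ℝ)) :=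
    (mul_le_mul_of_nonneg_left h1r hc).trans (by nlinarith)
  have h4 : c * ((∑ j, (ℓ j).natAbs : ℕ) : ℝ) ≤ M * ∑ i, y i * (ℓ i : ℝ) := by
    refine le_of_mul_le_mul_left ?_ hDr
    linarith
  calc _ = (M : ℝ)⁻¹ * (c * ((∑ j, (ℓ j).natAbs : ℕ) : ℝ)) := by ring
    _ ≤ (M : ℝ)⁻¹ * (M * ∑ i, y i * (ℓ i : ℝ)) :=
        mul_le_mul_of_nonneg_left h4 (inv_pos.2 hMr).le
    _ = _ := by rw [inv_mul_cancel_left₀ hMr.ne']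


/-- With the GKZ setup (`a_j`, `𝕃`), let `J` have `k+1`
elements with `(a_j)_{j∈J}` linearly independent over `ℝ`, let
`𝕃_J := {ℓ ∈ 𝕃 : ℓ_j ≥ 0 ∀ j ∈ J'}`, and let `γ ∈ ℂ^N` with
`γ_j ∈ ℤ_{≤0}` for `j ∈ J'`.  Then there is a real constant `c` such that for
every `w ∈ ℂ^N` with `Im(w·ℓ) > c` for every nonzero `ℓ ∈ 𝕃_J`, the Fourier
Γ-series `Ψ_{𝕃,γ}(w) = ∑_{ℓ∈𝕃} e^{2πi·w·(γ+ℓ)} ∏_j 1/Γ(γ_j+ℓ_j+1)`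
converges absolutely. -/
theorem fourier_gamma_series_summable {k N : ℕ} (hkN : k + 1 ≤ N)
    (a : Fin N → Fin (k + 1) → ℤ) (ha : Function.Injective a)
    (hgen : Submodule.span ℤ (Set.range a) = ⊤)
    (h : (Fin (k + 1) → ℤ) →+ ℤ) (hh : ∀ j, h (a j) = 1)
    (L : Set (Fin N → ℤ)) (hL : L = {ℓ | ∑ j, ℓ j • a j = 0})
    (J : Finset (Fin N)) (hJcard : J.card = k + 1)
    (hJind : LinearIndependent ℝ fun j : J => fun i => (a (j : Fin N) i : ℝ))
    (γ : Fin N → ℂ) (hγ : ∀ j ∉ J, ∃ m : ℤ, m ≤ 0 ∧ γ j = (m : ℂ))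
    (LJ : Set (Fin N → ℤ)) (hLJ : LJ = {ℓ ∈ L | ∀ j ∉ J, 0 ≤ ℓ j}) :
    ∃ c : ℝ, ∀ w : Fin N → ℂ,
      (∀ ℓ ∈ LJ, ℓ ≠ 0 → c < (∑ j, w j * (ℓ j : ℂ)).im) →
      Summable fun ℓ : L =>
        ‖Complex.exp (2 * Real.pi * Complex.I *
            ∑ j, w j * (γ j + (ℓ.1 j : ℂ))) *
          ∏ j, (Complex.Gamma (γ j + (ℓ.1 j : ℂ) + 1))⁻¹‖ := by
  subst hL hLJ
  choose C R hR hC hCR using fun j => inv_gamma_bound (γ j)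
  obtain ⟨δ, hδ, hlow⟩ := lin_lower a J hJcard hJind
  -- `Q` is a common bound for the `R j`, obtained as a product since each is at least `1`.
  set Q : ℝ := ∏ j, R j with hQ
  have hQ1 : 1 ≤ Q := Finset.one_le_prod fun j _ => hR j
  have hRQ : ∀ j, R j ≤ Q := fun j => by
    rw [hQ, ← Finset.mul_prod_erase _ _ (Finset.mem_univ j)]
    refine le_mul_of_one_le_right (by linarith [hR j]) ?_
    exact Finset.one_le_prod fun j _ => hR j
  set B : ℝ := Q * (N + 1) with hB
  have hB1 : 1 ≤ B := by
    have : (0 : ℝ) ≤ N := Nat.cast_nonneg N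
    nlinarith
  have him : ∀ (w : Fin N → ℂ) (ℓ : Fin N → ℤ),
      (∑ j, w j * (ℓ j : ℂ)).im = ∑ j, (w j).im * (ℓ j : ℝ) := by
    intro w ℓ
    rw [Complex.im_sum]
    exact Finset.sum_congr rfl fun j _ => by simp [Complex.mul_im]
  -- `c` is chosen so that `exp (-2π c δ) = 1 / (2 B)`.
  refine ⟨Real.log (2 * B) / (2 * Real.pi * δ), fun w hw => ?_⟩
  set c : ℝ := Real.log (2 * B) / (2 * Real.pi * δ) with hc
  have hc0 : 0 ≤ c := div_nonneg (Real.log_nonneg (by linarith)) (by positivity)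
  have hcδ : 2 * Real.pi * (c * δ) = Real.log (2 * B) := by
    rw [hc]; field_simp
  have hlow' := hlow c hc0 (fun j => (w j).im) (fun ℓ h1 h2 h3 => by
    rw [← him]; exact hw ℓ ⟨h1, h2⟩ h3)
  set A : ℝ := Real.exp (-(2 * Real.pi * (∑ j, w j * γ j).im)) * ∏ j, C j with hA
  have hA0 : 0 ≤ A := mul_nonneg (Real.exp_pos _).le (Finset.prod_nonneg fun j _ => hC j)
  refine Summable.of_nonneg_of_le (fun _ => norm_nonneg _) (fun ℓ => ?_)
    (((summable_pi_geom N).subtype _).mul_left A)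
  obtain ⟨ℓ, hℓ⟩ := ℓ
  simp only [Function.comp]
  by_cases hpos : ∀ j ∉ J, 0 ≤ ℓ j
  · have hsum : ∑ j, ℓ j = 0 := by
      have := congrArg h hℓ
      simpa only [map_sum, map_zsmul, hh, smul_eq_mul, mul_one, map_zero] using this
    set S : ℕ := ∑ j, (ℓ j).natAbs with hS
    have hexp : ‖Complex.exp (2 * Real.pi * Complex.I * ∑ j, w j * (γ j + (ℓ j : ℂ)))‖ ≤
        Real.exp (-(2 * Real.pi * (∑ j, w j * γ j).im)) * ((2 * B)⁻¹) ^ S := by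
      have h1 : ((2 * B)⁻¹) ^ S = Real.exp (-(2 * Real.pi * (c * δ * S))) := by
        rw [show -(2 * Real.pi * (c * δ * S)) = S * -(2 * Real.pi * (c * δ)) by ring, hcδ,
          Real.exp_nat_mul, Real.exp_neg, Real.exp_log (by linarith)]
      rw [h1, ← Real.exp_add, Complex.norm_exp, Real.exp_le_exp]
      have h2 : (2 * Real.pi * Complex.I * ∑ j, w j * (γ j + (ℓ j : ℂ))).re =
          -(2 * Real.pi * (∑ j, w j * γ j).im) - 2 * Real.pi * (∑ j, w j * (ℓ j : ℂ)).im := by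
        simp only [mul_add, Finset.sum_add_distrib]
        simp [Complex.mul_re, Complex.mul_im]
        ring
      rw [h2, him]
      have := mul_le_mul_of_nonneg_left (hlow' ℓ hℓ hpos) (by positivity : 0 ≤ 2 * Real.pi)
      simp only [hS]
      linarith
    have hprod : ‖∏ j, (Complex.Gamma (γ j + (ℓ j : ℂ) + 1))⁻¹‖ ≤ (∏ j, C j) * B ^ S := by
      rw [norm_prod]
      calc _ ≤ ∏ j, (C j * Q ^ (ℓ j).natAbs *
              (((-ℓ j).toNat.factorial : ℝ) / ((ℓ j).toNat.factorial : ℝ))) := by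
            refine Finset.prod_le_prod (fun j _ => norm_nonneg _) fun j _ => (hCR j _).trans ?_
            have := hC j
            have := hR j
            have := hRQ j
            gcongr
        _ = (∏ j, C j) * Q ^ S *
              ∏ j, (((-ℓ j).toNat.factorial : ℝ) / ((ℓ j).toNat.factorial : ℝ)) := by
            rw [Finset.prod_mul_distrib, Finset.prod_mul_distrib, Finset.prod_pow_eq_pow_sum]
        _ ≤ (∏ j, C j) * Q ^ S * (N + 1 : ℝ) ^ S :=
            mul_le_mul_of_nonneg_left (fac_prod_le ℓ hsum)
              (mul_nonneg (Finset.prod_nonneg fun j _ => hC j) (by positivity))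
        _ = _ := by rw [hB, mul_pow]; ring
    rw [norm_mul]
    refine (mul_le_mul hexp hprod (norm_nonneg _) (by positivity)).trans (le_of_eq ?_)
    rw [Finset.prod_pow_eq_pow_sum, ← hS, hA]
    have : (1 / 2 : ℝ) ^ S = ((2 * B)⁻¹) ^ S * B ^ S := by
      rw [← mul_pow]; congr 1; field_simp
    rw [this]; ring
  · push Not at hpos
    obtain ⟨j, hj, hneg⟩ := hpos
    obtain ⟨m, hm, hγm⟩ := hγ j hj
    have hz : (Complex.Gamma (γ j + (ℓ j : ℂ) + 1))⁻¹ = 0 := by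
      have : γ j + (ℓ j : ℂ) + 1 = -(((-(m + ℓ j + 1)).toNat : ℕ) : ℂ) := by
        have h1 : (((-(m + ℓ j + 1)).toNat : ℕ) : ℤ) = -(m + ℓ j + 1) :=
          Int.toNat_of_nonneg (by omega)
        have h2 : (((-(m + ℓ j + 1)).toNat : ℕ) : ℂ) = ((-(m + ℓ j + 1) : ℤ) : ℂ) := by
          rw [← h1]; norm_cast
        rw [h2, hγm]; push_cast; ring
      rw [this, Complex.Gamma_neg_nat_eq_zero, inv_zero]
    rw [Finset.prod_eq_zero (Finset.mem_univ j) hz, mul_zero, norm_zero]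
    exact mul_nonneg hA0 (Finset.prod_nonneg fun _ _ => by positivity)
end

section
/- Fix c ∈ ℂ^{k+1} and a subset J ⊆ {1, …, N} with k+1 elements such that the vectors a_j, j ∈ J, are linearly independent over ℝ. Let S := {γ = (γ_1, …, γ_N) ∈ ℂ^N : γ_1 a_1 + … + γ_N a_N = c and γ_j ∈ ℤ for all j ∈ J'}, and call γ, γ' ∈ S equivalent when γ − γ' ∈ 𝕃. Then the number of equivalence classes of S modulo 𝕃 is finite and equals |det((a_j)_{j ∈ J})|, the absolute value of the determinant of the (k+1)×(k+1) integer matrix whose columns are the vectors a_j, j ∈ J. -/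
/-!
Write `b i = a (e i)` for the vectors indexed by `J`, and let `M ⊆ ℤ^{k+1}` be the lattice they
span. Since `det b ≠ 0`, the quotient `ℤ^{k+1} / M` is finite with `|det b|` elements
(`card_quotient_span`), and the classes of `S` modulo `𝕃` are in bijection with it, by sending
`γ ∈ S` to the class of `∑_{j ∈ J'} γ_j a_j`.

* The map is well defined and injective (`mem_relations_iff`): if the integers `d_j` agree with
  `γ_j - γ'_j` for `j ∈ J'`, then `γ - γ' ∈ 𝕃` if and only if `∑_j d_j a_j ∈ M`. The values of `d`
  on `J` are irrelevant, as they only change the sum by an element of `M`.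
* It is surjective (`exists_solution`): since the `a_j` generate `ℤ^{k+1}`, every class is that of
  some `∑_j n_j a_j`, and the coordinates prescribed on `J'` by `n` extend to an element of `S`
  by solving a linear system with invertible matrix `b` over `ℂ`.
-/

lemma det_ne_zero_of_real {n : ℕ} (b : Fin n → Fin n → ℤ)
    (hb : LinearIndependent ℝ fun i => fun s => (b i s : ℝ)) :
    (Matrix.of fun i i' => b i' i).det ≠ 0 := by
  have h1 : IsUnit (Matrix.of fun i s => (b i s : ℝ)) :=
    Matrix.linearIndependent_rows_iff_isUnit.mp hb
  have h2 : (Matrix.of fun i s => (b i s : ℝ))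
      = ((Matrix.of fun i i' => b i' i).transpose).map (Int.castRingHom ℝ) := by
    ext i j; simp
  rw [Matrix.isUnit_iff_isUnit_det, h2, ← RingHom.mapMatrix_apply, ← RingHom.map_det,
    Matrix.det_transpose, isUnit_iff_ne_zero] at h1
  intro h0
  exact h1 (by rw [h0, map_zero])

lemma card_quotient_span {n : ℕ} (b : Fin n → Fin n → ℤ)
    (hdet : (Matrix.of fun i i' => b i' i).det ≠ 0) :
    Nat.card ((Fin n → ℤ) ⧸ Submodule.span ℤ (Set.range b))
      = (Matrix.of fun i i' => b i' i).det.natAbs := by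
  have hli : LinearIndependent ℤ b := by
    apply Matrix.linearIndependent_rows_of_det_ne_zero (A := Matrix.of b)
    rwa [← Matrix.det_transpose]
  have h := Submodule.natAbs_det_basis_change (Pi.basisFun ℤ (Fin n))
    (Submodule.span ℤ (Set.range b)) (Module.Basis.span hli)
  rw [← h, Module.Basis.det_apply]
  congr 2
  ext i j
  simp [Module.Basis.toMatrix_apply, Module.Basis.span_apply]

/-- The `ℂ`-linear system with integer coefficient columns `b i` is uniquely solvable. -/
lemma bijective_complex {n : ℕ} (b : Fin n → Fin n → ℤ)
    (hdet : (Matrix.of fun i i' => b i' i).det ≠ 0) :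
    Function.Bijective fun (x : Fin n → ℂ) (s : Fin n) => ∑ i, x i * (b i s : ℂ) := by
  have h2 : IsUnit ((Matrix.of fun i i' => b i' i).map (Int.castRingHom ℂ)) := by
    rw [Matrix.isUnit_iff_isUnit_det, ← RingHom.mapMatrix_apply, ← RingHom.map_det,
      isUnit_iff_ne_zero]
    simpa using hdet
  have h3 : (fun (x : Fin n → ℂ) (s : Fin n) => ∑ i, x i * (b i s : ℂ))
      = ((Matrix.of fun i i' => b i' i).map (Int.castRingHom ℂ)).mulVec := by
    ext x s
    simp [Matrix.mulVec, dotProduct, mul_comm]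
  rw [h3]
  exact ⟨Matrix.mulVec_injective_iff_isUnit.mpr h2, Matrix.mulVec_surjective_iff_isUnit.mpr h2⟩

/-- Any integers prescribed on the complement of `J` extend to a solution of `∑ γ_j a_j = c`. -/
lemma exists_solution {n N : ℕ} (a : Fin N → Fin n → ℤ) (e : Fin n → Fin N)
    (he : Function.Injective e) (hdet : (Matrix.of fun i i' => a (e i') i).det ≠ 0)
    (c : Fin n → ℂ) (m : Fin N → ℤ) :
    ∃ γ : Fin N → ℂ, (∀ s, ∑ j, γ j * (a j s : ℂ) = c s) ∧
      ∀ j ∉ Set.range e, γ j = (m j : ℂ) := by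
  obtain ⟨x, hx⟩ := (bijective_complex (fun i => a (e i)) hdet).2
    (fun s => c s - ∑ j, (m j : ℂ) * (a j s : ℂ))
  refine ⟨fun j => m j + Function.extend e x 0 j, fun s => ?_, fun j hj => ?_⟩
  · have h1 : ∑ i, x i * (a (e i) s : ℂ) = ∑ j, Function.extend e x 0 j * (a j s : ℂ) :=
      Fintype.sum_of_injective e he _ _
        (fun j hj => by rw [Function.extend_apply' _ _ _ hj]; simp)
        (fun i => by rw [he.extend_apply])
    have h2 := congrFun hx s
    simp only [add_mul, Finset.sum_add_distrib]
    rw [← h1]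
    simp only at h2
    rw [h2]
    ring
  · simp only
    rw [Function.extend_apply' _ _ _ hj]
    simp

/-- A complex relation among the `a_j` supported on `J` is trivial. -/
lemma eq_zero_of_supported {n N : ℕ} (a : Fin N → Fin n → ℤ) (e : Fin n → Fin N)
    (he : Function.Injective e) (hdet : (Matrix.of fun i i' => a (e i') i).det ≠ 0)
    (v : Fin N → ℂ) (hv : ∀ s, ∑ j, v j * (a j s : ℂ) = 0)
    (hv' : ∀ j ∉ Set.range e, v j = 0) : v = 0 := by
  have h1 : v ∘ e = 0 := by
    apply (bijective_complex (fun i => a (e i)) hdet).1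
    ext s
    have h2 : ∑ i, v (e i) * (a (e i) s : ℂ) = ∑ j, v j * (a j s : ℂ) :=
      Fintype.sum_of_injective e he _ _ (fun j hj => by rw [hv' j hj, zero_mul]) fun _ => rfl
    simp [h2, hv]
  ext j
  by_cases hj : j ∈ Set.range e
  · obtain ⟨i, rfl⟩ := hj
    exact congrFun h1 i
  · exact hv' j hj

/-- Let `v` be a complex relation among the `a_j` (in the application, a difference of two elements
of `S`) which agrees with the integer vector `d` outside `J`. Then `v` lies in `𝕃` exactly when
`∑ d_j a_j` lies in the lattice spanned by the `a_j` with `j ∈ J`. -/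
lemma mem_relations_iff {n N : ℕ} (a : Fin N → Fin n → ℤ) (e : Fin n → Fin N)
    (he : Function.Injective e) (hdet : (Matrix.of fun i i' => a (e i') i).det ≠ 0)
    (v : Fin N → ℂ) (hv : ∀ s, ∑ j, v j * (a j s : ℂ) = 0)
    (d : Fin N → ℤ) (hd : ∀ j ∉ Set.range e, v j = (d j : ℂ)) :
    (∃ ℓ : Fin N → ℤ, (∀ j, v j = (ℓ j : ℂ)) ∧ ∑ j, ℓ j • a j = 0) ↔
      ∑ j, d j • a j ∈ Submodule.span ℤ (Set.range fun i => a (e i)) := by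
  rw [Submodule.mem_span_range_iff_exists_fun]
  constructor
  · rintro ⟨ℓ, hℓ, h0⟩
    refine ⟨fun i => d (e i) - ℓ (e i), ?_⟩
    have h1 : ∑ i, (d (e i) - ℓ (e i)) • a (e i) = ∑ j, (d j - ℓ j) • a j := by
      refine Fintype.sum_of_injective e he _ _ (fun j hj => ?_) fun _ => rfl
      have h2 : d j = ℓ j := by exact_mod_cast (hd j hj).symm.trans (hℓ j)
      rw [h2, sub_self, zero_smul]
    rw [h1]
    simp only [sub_smul, Finset.sum_sub_distrib]
    rw [h0, sub_zero]
  · rintro ⟨z, hz⟩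
    have h1 : ∑ i, z i • a (e i) = ∑ j, Function.extend e z 0 j • a j :=
      Fintype.sum_of_injective e he _ _
        (fun j hj => by rw [Function.extend_apply' _ _ _ hj]; simp)
        (fun i => by rw [he.extend_apply])
    have h2 : ∑ j, (d j - Function.extend e z 0 j) • a j = 0 := by
      simp only [sub_smul, Finset.sum_sub_distrib]
      rw [← h1, hz, sub_self]
    refine ⟨fun j => d j - Function.extend e z 0 j, fun j => ?_, h2⟩
    -- The difference of `v` and this integer relation is a relation supported on `J`.
    have h3 := eq_zero_of_supported a e he hdet
      (fun j => v j - ((d j - Function.extend e z 0 j : ℤ) : ℂ)) (fun s => ?_) (fun j hj => ?_)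
    · exact sub_eq_zero.mp (congrFun h3 j)
    · have h4 := congrArg (Int.cast : ℤ → ℂ) (congrFun h2 s)
      simp only [Finset.sum_apply, Pi.smul_apply, smul_eq_mul, Pi.zero_apply, Int.cast_sum,
        Int.cast_mul, Int.cast_zero] at h4
      simp only [sub_mul (v _), Finset.sum_sub_distrib]
      rw [hv, h4, sub_zero]
    · rw [Function.extend_apply' _ _ _ hj, hd j hj]
      simp


/-- Fix `c ∈ ℂ^{k+1}` and a `(k+1)`-element subset
`J ⊆ {1,…,N}` (given by the image of an injection `e : Fin (k+1) → Fin N`)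
such that the vectors `a_j`, `j ∈ J`, are linearly independent over `ℝ`.
Let `S = {γ ∈ ℂ^N : ∑_j γ_j a_j = c, γ_j ∈ ℤ for j ∈ J'}` with `γ ∼ γ'`
when `γ − γ' ∈ 𝕃`.  Then the number of equivalence classes of `S` modulo `𝕃`
is finite and equals `|det((a_j)_{j∈J})|`: there is a finite set `R` of
representatives, meeting every class exactly once, of that cardinality. -/
theorem count_gamma_classes {k N : ℕ} (hkN : k + 1 ≤ N)
    (a : Fin N → Fin (k + 1) → ℤ) (ha : Function.Injective a)
    (hgen : Submodule.span ℤ (Set.range a) = ⊤)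
    (h : (Fin (k + 1) → ℤ) →+ ℤ) (hh : ∀ j, h (a j) = 1)
    (L : Set (Fin N → ℂ))
    (hL : L = {v | ∃ ℓ : Fin N → ℤ, (∀ j, v j = (ℓ j : ℂ)) ∧ ∑ j, ℓ j • a j = 0})
    (c : Fin (k + 1) → ℂ)
    (e : Fin (k + 1) → Fin N) (he : Function.Injective e)
    (hind : LinearIndependent ℝ fun i : Fin (k + 1) => fun s => (a (e i) s : ℝ))
    (S : Set (Fin N → ℂ))
    (hS : S = {γ | (∀ i, ∑ j, γ j * (a j i : ℂ) = c i) ∧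
      ∀ j, (∀ i, j ≠ e i) → ∃ m : ℤ, γ j = (m : ℂ)}) :
    ∃ R : Finset (Fin N → ℂ), (↑R : Set (Fin N → ℂ)) ⊆ S ∧
      (∀ γ ∈ S, ∃! γ' : Fin N → ℂ, γ' ∈ R ∧ γ - γ' ∈ L) ∧
      R.card = (Matrix.det (Matrix.of
        fun i i' : Fin (k + 1) => a (e i') i)).natAbs := by
  classical
  subst hL hS
  have hdet := det_ne_zero_of_real (fun i => a (e i)) hind
  have hcard := card_quotient_span (fun i => a (e i)) hdet
  set M := Submodule.span ℤ (Set.range fun i => a (e i)) with hM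
  have hfin : Finite ((Fin (k + 1) → ℤ) ⧸ M) :=
    Nat.finite_of_card_ne_zero (by rw [hcard]; exact Int.natAbs_ne_zero.mpr hdet)
  have : Fintype ((Fin (k + 1) → ℤ) ⧸ M) := Fintype.ofFinite _
  have hrep : ∀ q : (Fin (k + 1) → ℤ) ⧸ M, ∃ m : Fin N → ℤ, M.mkQ (∑ j, m j • a j) = q := by
    intro q
    obtain ⟨w, rfl⟩ := M.mkQ_surjective q
    have hw : w ∈ Submodule.span ℤ (Set.range a) := hgen ▸ Submodule.mem_top
    obtain ⟨m, hm⟩ := (Submodule.mem_span_range_iff_exists_fun ℤ).mp hw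
    exact ⟨m, by rw [hm]⟩
  choose m hm using hrep
  -- One representative `G q` in `S` for each class `q` of the quotient lattice.
  choose G hG hG' using fun q => exists_solution a e he hdet c (m q)
  -- `γ` is equivalent to the representative `G q` exactly when `q` is the class of
  -- `∑ n_j a_j`, where `n` is any integer vector agreeing with `γ` outside `J`.
  have key : ∀ (γ : Fin N → ℂ) (n : Fin N → ℤ), (∀ i, ∑ j, γ j * (a j i : ℂ) = c i) →
      (∀ j ∉ Set.range e, γ j = (n j : ℂ)) → ∀ q,
      ((∃ ℓ : Fin N → ℤ, (∀ j, (γ - G q) j = (ℓ j : ℂ)) ∧ ∑ j, ℓ j • a j = 0) ↔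
        M.mkQ (∑ j, n j • a j) = q) := by
    intro γ n hγ hn q
    rw [mem_relations_iff a e he hdet (γ - G q)
      (fun s => by simp [sub_mul, Finset.sum_sub_distrib, hγ, hG]) (fun j => n j - m q j)
      (fun j hj => by simp [hn j hj, hG' q j hj])]
    conv_rhs => rw [← hm q]
    simp only [sub_smul, Finset.sum_sub_distrib]
    exact (Submodule.Quotient.eq M).symm
  have hinj : Function.Injective G := by
    intro q q' hqq
    have h1 := (key (G q) (m q) (hG q) (hG' q) q').mp ⟨0, by simp [hqq], by simp⟩
    rw [← h1, hm]
  refine ⟨Finset.univ.image G, ?_, ?_, ?_⟩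
  · intro γ hγ
    obtain ⟨q, -, rfl⟩ := Finset.mem_image.mp (Finset.mem_coe.mp hγ)
    refine ⟨hG q, fun j hj => ⟨m q j, hG' q j ?_⟩⟩
    rintro ⟨i, rfl⟩
    exact hj i rfl
  · rintro γ ⟨hγ, hγint⟩
    have hn : ∀ j, ∃ n : ℤ, j ∉ Set.range e → γ j = (n : ℂ) := by
      intro j
      by_cases hj : j ∈ Set.range e
      · exact ⟨0, fun h' => absurd hj h'⟩
      · obtain ⟨n, hn⟩ := hγint j fun i hi => hj ⟨i, hi.symm⟩
        exact ⟨n, fun _ => hn⟩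
    choose n hn using hn
    refine ⟨G (M.mkQ (∑ j, n j • a j)), ⟨Finset.mem_image_of_mem _ (Finset.mem_univ _),
      (key γ n hγ hn _).mpr rfl⟩, ?_⟩
    rintro γ' ⟨hγ', hmem⟩
    obtain ⟨q, -, rfl⟩ := Finset.mem_image.mp hγ'
    rw [(key γ n hγ hn q).mp hmem]
  · rw [Finset.card_image_of_injective _ hinj, Finset.card_univ, ← Nat.card_eq_fintype_card, hcard]
end

section
/- Let B be a d×N integer matrix whose rows form a ℤ-basis of 𝕃, and let A be the (k+1)×N integer matrix with columns a_1, …, a_N. Then for every subset J ⊆ {1, …, N} with k+1 elements, |det(B_{J'})| = |det(A_J)|, where A_J is the (k+1)×(k+1) submatrix of A formed by the columns indexed by J and B_{J'} is the d×d submatrix of B formed by the columns indexed by J' := {1, …, N} ∖ J. -/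
/-!
Let `A` be the matrix with columns `a j`. Since the `a j` generate, `A` has an integer right
inverse `S`. The columns of `1 - S A` lie in the kernel of `A`, which is spanned by the rows of
`B`, so `1 - S A = Bᵀ T` for an integer matrix `T`. Hence the square matrix `M = [S | Bᵀ]` has
inverse `[A ; T]`, and `det M = ±1`. Ordering the indices as `J` followed by its complement `J'`,
the relations `A S = 1` and `A Bᵀ = 0` give
`[[A_J, A_J'], [0, 1]] * M = [[1, 0], [S_J', (B_J')ᵀ]]`,
and taking determinants yields `det A_J * det M = det B_J'`, so the two minors agree up to sign.
-/

/-- Let `B` be a `d×N` integer matrix whose rows form a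
`ℤ`-basis of `𝕃`, and let `A` be the `(k+1)×N` integer matrix with columns
`a_1, …, a_N`.  Then for every subset `J ⊆ {1,…,N}` with `k+1` elements
(given by an injection `e : Fin (k+1) → Fin N`, with `J'` enumerated by a
complementary injection `e' : Fin d → Fin N`),
`|det(B_{J'})| = |det(A_J)|`. -/
theorem det_submatrix_eq {k N d : ℕ} (hd : N = k + 1 + d)
    (a : Fin N → Fin (k + 1) → ℤ) (ha : Function.Injective a)
    (hgen : Submodule.span ℤ (Set.range a) = ⊤)
    (h : (Fin (k + 1) → ℤ) →+ ℤ) (hh : ∀ j, h (a j) = 1)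
    (B : Matrix (Fin d) (Fin N) ℤ)
    (hBrows : ∀ r, ∑ j, B r j • a j = 0)
    (hBspan : ∀ ℓ : Fin N → ℤ, (∑ j, ℓ j • a j = 0) →
      ∃ cf : Fin d → ℤ, ∀ j, ℓ j = ∑ r, cf r * B r j)
    (hBind : ∀ cf : Fin d → ℤ, (∀ j, ∑ r, cf r * B r j = 0) → cf = 0)
    (e : Fin (k + 1) → Fin N) (e' : Fin d → Fin N)
    (he : Function.Injective e) (he' : Function.Injective e')
    (hcompl : ∀ j : Fin N, (∃ i, j = e i) ↔ ¬∃ r, j = e' r) :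
    (Matrix.det (Matrix.of fun r r' : Fin d => B r (e' r'))).natAbs =
      (Matrix.det (Matrix.of fun i i' : Fin (k + 1) => a (e i') i)).natAbs := by
  set g : Fin (k + 1) ⊕ Fin d → Fin N := Sum.elim e e' with hg
  have hbij : Function.Bijective g := by
    constructor
    · refine he.sumElim he' fun i r hir => ?_
      exact (hcompl (e i)).1 ⟨i, rfl⟩ ⟨r, hir⟩
    · intro j
      by_cases hj : ∃ r, j = e' r
      · obtain ⟨r, rfl⟩ := hj
        exact ⟨Sum.inr r, rfl⟩
      · obtain ⟨i, rfl⟩ := (hcompl j).2 hj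
        exact ⟨Sum.inl i, rfl⟩
  have hsum : ∀ f : Fin N → ℤ, ∑ i, f (e i) + ∑ r, f (e' r) = ∑ j, f j := by
    intro f
    rw [← (Equiv.ofBijective g hbij).sum_comp f, Fintype.sum_sum_type]
    rfl
  -- `c` is a right inverse `S` of `A`: the coefficients of the standard basis in the `a_j`.
  have hc : ∀ p : Fin (k + 1), ∃ c : Fin N → ℤ, ∑ j, c j • a j = Pi.single p 1 := fun p =>
    (Submodule.mem_span_range_iff_exists_fun ℤ).1 (hgen ▸ Submodule.mem_top)
  choose c hc using hc
  have hAS : ∀ p i, ∑ j, a j i * c p j = if i = p then 1 else 0 := by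
    intro p i
    have := congrFun (hc p) i
    simpa [Finset.sum_apply, Pi.single_apply, mul_comm] using this
  have hAB : ∀ r i, ∑ j, a j i * B r j = 0 := by
    intro r i
    have := congrFun (hBrows r) i
    simpa [Finset.sum_apply, mul_comm] using this
  -- The columns of `1 - S A` are relations among the `a_j`, so `1 - S A = Bᵀ T`.
  have ht : ∀ j : Fin N, ∃ t : Fin d → ℤ, ∀ j',
      (if j' = j then 1 else 0) - ∑ p, a j p * c p j' = ∑ r, t r * B r j' := by
    intro j
    refine hBspan _ ?_
    ext i
    simp only [Finset.sum_apply, Pi.smul_apply, smul_eq_mul, Pi.zero_apply, sub_mul, ite_mul,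
      one_mul, zero_mul, Finset.sum_sub_distrib, Finset.sum_ite_eq',
      Finset.mem_univ, if_true, Finset.sum_mul]
    rw [Finset.sum_comm]
    have : ∀ p, ∑ j', a j p * c p j' * a j' i = a j p * if i = p then 1 else 0 := by
      intro p
      rw [← hAS p i, Finset.mul_sum]
      exact Finset.sum_congr rfl fun _ _ => by ring
    simp [this]
  choose t ht using ht
  let M : Matrix (Fin (k + 1) ⊕ Fin d) (Fin (k + 1) ⊕ Fin d) ℤ :=
    Matrix.of fun x y => Sum.elim (fun p => c p (g x)) (fun r => B r (g x)) y
  let W : Matrix (Fin (k + 1) ⊕ Fin d) (Fin (k + 1) ⊕ Fin d) ℤ :=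
    Matrix.of fun y x => Sum.elim (fun p => a (g x) p) (fun r => t (g x) r) y
  have hMW : M * W = 1 := by
    ext x y
    have h1 := ht (g y) (g x)
    simp only [Matrix.mul_apply, M, W, Matrix.of_apply, Fintype.sum_sum_type, Sum.elim_inl,
      Sum.elim_inr, Matrix.one_apply]
    simp only [hbij.1.eq_iff] at h1
    rw [sub_eq_iff_eq_add] at h1
    rw [h1, add_comm]
    simp only [mul_comm]
  have hM : M.det.natAbs = 1 := by
    refine Int.isUnit_iff_natAbs_eq.1 (IsUnit.of_mul_eq_one W.det ?_)
    rw [← Matrix.det_mul, hMW, Matrix.det_one]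
  have hPM : Matrix.fromBlocks (Matrix.of fun i i' : Fin (k + 1) => a (e i') i)
        (Matrix.of fun i r => a (e' r) i) 0 (1 : Matrix (Fin d) (Fin d) ℤ) * M =
      Matrix.fromBlocks 1 0 (Matrix.of fun s p => c p (e' s))
        (Matrix.of fun r r' : Fin d => B r (e' r')).transpose := by
    ext x y
    rcases x with i | s <;> rcases y with p | r
    · simpa [Matrix.mul_apply, M, hg, Matrix.one_apply] using
        (hsum fun j => a j i * c p j).trans (hAS p i)
    · simpa [Matrix.mul_apply, M, hg] using (hsum fun j => a j i * B r j).trans (hAB r i)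
    · simp [Matrix.mul_apply, M, hg, Matrix.one_apply]
    · simp [Matrix.mul_apply, M, hg, Matrix.one_apply]
  have hdet := congrArg (fun X => (Matrix.det X).natAbs) hPM
  simp only [Matrix.det_mul, Matrix.det_fromBlocks_zero₂₁, Matrix.det_fromBlocks_zero₁₂,
    Matrix.det_one, Matrix.det_transpose, one_mul, mul_one, Int.natAbs_mul, hM] at hdet
  exact hdet.symm
end
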